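/- Let G = (V,E) be a finite diamond-free DAG and X ∈ V. If there exists a vertex W ∈ Ch(X)∪{X} such that Mb(X)∪{X} = Pa(W)∪{W}, then X is removable in G. -/

import Mathlib

/-!
A vertex `X` is removable as soon as the following two conditions hold, and diamond-freeness
derives both of them from `Mb(X) ∪ {X} = Pa(W) ∪ {W}`:

* `AdjCond`: every child of `X` is adjacent to every other neighbor of `X`;
* `ParentCond`: if `Y → Z` are children of `X`, then every parent of `Y` is a parent of `Z`.

If `W = X`, then `X` has no children and the conditions are vacuous. If `W` is a child of `X`, then
all the vertices other than `W` that occur in the conditions are parents of `W`, and each required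
adjacency is the missing edge of a potential diamond with sink `W` and with center `X` or `Y`.

Removability: a path that is open after deleting `X` is open in the whole graph. Conversely, take an
open path through `A - X - B` (`bypass`). If `X` is not a collider there, then `A` and `B` are
adjacent and `X` is skipped; in the case `A ← X → B` with `A → B`, if `A` was a collider
`T → A ← X`, then `T → B` by `ParentCond` and `A` is skipped as well. If `X` is a collider, it has a
child `C` with a descendant in `S` (or in `S` itself), and `A → C ← B` replaces `X`. The result is an
open walk avoiding `X`. It stays open in the smaller graph, since a directed path `a → X → b` can be
shortened to `a → b`. Finally, an open walk between distinct vertices contains an open path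
(`exists_openPath`): cutting out the closed piece between two visits of a vertex keeps it open.
-/

open Set

variable {V : Type*}

/-- Adjacency (neighbor relation) in a directed graph with edge relation `E`. -/
def Adj (E : V → V → Prop) (x y : V) : Prop := E x y ∨ E y x

/-- The digraph `E` is acyclic (no directed cycles). -/
def Acyclic (E : V → V → Prop) : Prop := ∀ v : V, ¬ Relation.TransGen E v v

/-- Parents of `x`. -/
def Pa (E : V → V → Prop) (x : V) : Set V := {y | E y x}

/-- Children of `x`. -/
def Ch (E : V → V → Prop) (x : V) : Set V := {y | E x y}

/-- Co-parents of `x`: distinct, non-adjacent vertices sharing a child with `x`. -/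
def CP (E : V → V → Prop) (x : V) : Set V :=
  {y | y ≠ x ∧ ¬ Adj E x y ∧ ∃ w, E x w ∧ E y w}

/-- The (graphical) Markov boundary of `x`. -/
def Mb (E : V → V → Prop) (x : V) : Set V := Pa E x ∪ Ch E x ∪ CP E x

/-- `y` is a descendant of `x`: directed path of length ≥ 1. -/
def Desc (E : V → V → Prop) : V → V → Prop := Relation.TransGen E

/-- `p : Fin (n+1) → V` is a path: distinct vertices with consecutive vertices adjacent. -/
def IsPath (E : V → V → Prop) {n : ℕ} (p : Fin (n + 1) → V) : Prop :=
  Function.Injective p ∧ ∀ i : Fin n, Adj E (p i.castSucc) (p i.succ)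

/-- The path `p` is blocked by the set `S`: some interior non-collider vertex lies in `S`,
or some interior collider vertex is such that neither it nor any of its descendants lies in `S`. -/
def Blocked (E : V → V → Prop) (S : Set V) {n : ℕ} (p : Fin (n + 1) → V) : Prop :=
  ∃ k : ℕ, ∃ _hk0 : 0 < k, ∃ _hkn : k < n,
    (¬ (E (p ⟨k - 1, by omega⟩) (p ⟨k, by omega⟩) ∧
          E (p ⟨k + 1, by omega⟩) (p ⟨k, by omega⟩)) ∧ p ⟨k, by omega⟩ ∈ S) ∨
    ((E (p ⟨k - 1, by omega⟩) (p ⟨k, by omega⟩) ∧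
          E (p ⟨k + 1, by omega⟩) (p ⟨k, by omega⟩)) ∧ p ⟨k, by omega⟩ ∉ S ∧
        ∀ d, Desc E (p ⟨k, by omega⟩) d → d ∉ S)

/-- `S` d-separates the distinct vertices `x` and `y` in the digraph `E`. -/
def DSep (E : V → V → Prop) (x y : V) (S : Set V) : Prop :=
  x ≠ y ∧ x ∉ S ∧ y ∉ S ∧
    ∀ (n : ℕ) (p : Fin (n + 1) → V), 0 < n → IsPath E p →
      p 0 = x → p (Fin.last n) = y → Blocked E S p

/-- The induced subgraph obtained from `E` by deleting the vertex `x`. -/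
def Del (E : V → V → Prop) (x : V) : V → V → Prop := fun a b => E a b ∧ a ≠ x ∧ b ≠ x

/-- `x` is removable in `E`: d-separation statements not involving `x` are the same
in `E` and in the induced subgraph with `x` deleted. -/
def Removable (E : V → V → Prop) (x : V) : Prop :=
  ∀ y z : V, y ≠ x → z ≠ x → y ≠ z → ∀ S : Set V, x ∉ S →
    (DSep E y z S ↔ DSep (Del E x) y z S)

/-- The clique number of the skeleton of `E` is at most `m`. -/
def CliqueNumLE (E : V → V → Prop) (m : ℕ) : Prop :=
  ∀ K : Finset V, (∀ x ∈ K, ∀ y ∈ K, x ≠ y → Adj E x y) → K.card ≤ m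

/-- Conditions (i) and (ii) for every `S ⊆ Mb(x)` with `|S| ≤ t`. -/
def RemCond (E : V → V → Prop) (x : V) (t : ℕ) : Prop :=
  ∀ S : Finset V, ↑S ⊆ Mb E x → S.card ≤ t →
    (∀ y ∈ Mb E x \ ↑S, ∀ z ∈ Mb E x \ ↑S, y ≠ z →
        ¬ DSep E y z ((Mb E x ∪ {x}) \ ({y, z} ∪ ↑S))) ∧
    ∀ y ∈ Mb E x \ ↑S, ¬ DSep E x y (Mb E x \ ({y} ∪ ↑S))

/-- `E` is diamond-free: whenever `a`, `b`, `c` are all parents of some vertex `d` and `a`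
is adjacent to both `b` and `c`, then `b` and `c` are adjacent. -/
def DiamondFree (E : V → V → Prop) : Prop :=
  ∀ a b c d : V, a ≠ b → a ≠ c → b ≠ c → E a d → E b d → E c d →
    Adj E a b → Adj E a c → Adj E b c

/-! ### Open walks -/

/-- The middle vertex `b` of three consecutive vertices `a, b, c` does not block: if it is a
collider, then it or one of its descendants is in `S`; otherwise it is not in `S`. -/
def OpenAt (E : V → V → Prop) (S : Set V) (a b c : V) : Prop :=
  (E a b → E c b → ∃ d ∈ S, Relation.ReflTransGen E b d) ∧ (¬ (E a b ∧ E c b) → b ∉ S)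

/-- The vertices `p 0, …, p n` form a walk (repetitions allowed) none of whose interior positions
blocks. The values of `p` beyond `n` are irrelevant. -/
def OpenWalk (E : V → V → Prop) (S : Set V) (n : ℕ) (p : ℕ → V) : Prop :=
  (∀ i, i < n → Adj E (p i) (p (i + 1))) ∧
    ∀ k, k + 1 < n → OpenAt E S (p k) (p (k + 1)) (p (k + 2))

lemma Acyclic.asymm {E : V → V → Prop} (h : Acyclic E) {a b : V} (hab : E a b) : ¬ E b a :=
  fun hba => h a (.tail (.single hab) hba)

lemma Acyclic.ne {E : V → V → Prop} (h : Acyclic E) {a b : V} (hab : E a b) : a ≠ b := by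
  rintro rfl
  exact h a (.single hab)

lemma OpenAt.congr {E : V → V → Prop} {S : Set V} {a b c a₁ c₁ : V} (h : OpenAt E S a b c)
    (ha : E a b ↔ E a₁ b) (hc : E c b ↔ E c₁ b) : OpenAt E S a₁ b c₁ := by
  unfold OpenAt at *
  rwa [← ha, ← hc]

/-- Removing the positions `i + 1, …, i + c` from an open walk leaves an open walk, provided the new
junction is an edge and its two ends do not block. For `i + c = n` this takes the initial piece
of length `i`. -/
lemma OpenWalk.cut {E : V → V → Prop} {S : Set V} {n : ℕ} {p : ℕ → V} (h : OpenWalk E S n p)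
    (i c : ℕ) (hic : i + c ≤ n) (hadj : i + c < n → Adj E (p i) (p (i + c + 1)))
    (hop1 : ∀ k, k + 1 = i → i + c < n → OpenAt E S (p k) (p i) (p (i + c + 1)))
    (hop2 : i + c + 1 < n → OpenAt E S (p i) (p (i + c + 1)) (p (i + c + 2))) :
    OpenWalk E S (n - c) (fun k => if k ≤ i then p k else p (k + c)) := by
  constructor
  · intro k hk
    rcases lt_trichotomy k i with hki | rfl | hki
    · simpa [hki.le, Nat.succ_le_of_lt hki] using h.1 k (by omega)
    · simpa [add_right_comm] using hadj (by omega)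
    · have := h.1 (k + c) (by omega)
      simp only [if_neg hki.not_ge, if_neg (by omega : ¬ k + 1 ≤ i), add_right_comm _ _ c]
      exact this
  · intro k hk
    rcases lt_trichotomy (k + 1) i with hki | hki | hki
    · simpa [(by omega : k ≤ i), hki.le, (by omega : k + 2 ≤ i)] using h.2 k (by omega)
    · subst hki
      have := hop1 k rfl (by omega)
      simpa [(by omega : k + 1 + c + 1 = k + 2 + c)] using this
    · rcases Nat.lt_or_ge i k with hik | hik
      · have := h.2 (k + c) (by omega)
        simp only [if_neg hik.not_ge, if_neg hki.not_ge, if_neg (by omega : ¬ k + 2 ≤ i),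
          add_right_comm _ _ c]
        exact this
      · obtain rfl : k = i := by omega
        have := hop2 (by omega)
        simpa [add_right_comm] using this

/-- Following an open walk along an outgoing edge of `p i`, either all edges keep pointing forward,
or the first collider shows that `p i` has a descendant in `S`. -/
lemma OpenWalk.forward {E : V → V → Prop} {S : Set V} {n : ℕ} {p : ℕ → V}
    (h : OpenWalk E S n p) {i : ℕ} (hi : E (p i) (p (i + 1))) (m : ℕ) (hm : i + m + 1 ≤ n) :
    (∃ d ∈ S, Relation.ReflTransGen E (p i) d) ∨
      (E (p (i + m)) (p (i + m + 1)) ∧ Relation.TransGen E (p i) (p (i + m + 1))) := by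
  induction m with
  | zero => exact .inr ⟨hi, .single hi⟩
  | succ m ih =>
    rcases ih (by omega) with h1 | ⟨h1, h2⟩
    · exact .inl h1
    · rcases h.1 (i + m + 1) (by omega) with h3 | h3
      · exact .inr ⟨h3, .tail h2 h3⟩
      · obtain ⟨d, hd, hr⟩ := (h.2 (i + m) (by omega)).1 h1 h3
        exact .inl ⟨d, hd, h2.to_reflTransGen.trans hr⟩

/-- Cutting out a closed piece of an open walk leaves an open walk. -/
lemma OpenWalk.cut_loop {E : V → V → Prop} (hE : Acyclic E) {S : Set V} {n : ℕ} {p : ℕ → V}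
    (h : OpenWalk E S n p) (i c : ℕ) (hc : 0 < c) (hic : i + c ≤ n) (hp : p i = p (i + c)) :
    OpenWalk E S (n - c) (fun k => if k ≤ i then p k else p (k + c)) := by
  refine h.cut i c hic (fun hn => hp ▸ h.1 (i + c) hn) ?_ (fun hn => hp ▸ h.2 (i + c) hn)
  rintro k rfl hn
  have hop1 := h.2 k (by omega)
  obtain ⟨c, rfl⟩ : ∃ j, c = j + 1 := ⟨c - 1, by omega⟩
  have hop2 := h.2 (k + 1 + c) (by omega)
  refine ⟨fun h1 h2 => ?_, fun hnc hS => ?_⟩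
  · -- The merged position is a collider: either the walk entered the loop at a collider,
    -- or it leaves the vertex forward and cannot return without meeting a collider.
    rcases h.1 (k + 1) (by omega) with h3 | h3
    · rcases h.forward h3 c (by omega) with h4 | h4
      · exact h4
      · exact absurd (hp ▸ h4.2 : Relation.TransGen E (p (k + 1)) (p (k + 1))) (hE _)
    · exact hop1.1 h1 h3
  · by_cases h1 : E (p k) (p (k + 1))
    · have h2 : ¬ E (p (k + 1 + (c + 1) + 1)) (p (k + 1)) := fun h2 => hnc ⟨h1, h2⟩
      rw [hp] at h2 hS
      exact hop2.2 (fun h3 => h2 h3.2) hS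
    · exact hop1.2 (fun h3 => h1 h3.1) hS

/-- An open walk contains an open path with the same ends. -/
lemma exists_openPath {E : V → V → Prop} (hE : Acyclic E) {S : Set V} (n : ℕ) (p : ℕ → V)
    (h : OpenWalk E S n p) :
    ∃ m q, OpenWalk E S m q ∧ q 0 = p 0 ∧ q m = p n ∧
      ∀ i j, i ≤ m → j ≤ m → q i = q j → i = j := by
  induction n using Nat.strong_induction_on generalizing p with
  | _ n ih =>
    by_cases hinj : ∃ i c, 0 < c ∧ i + c ≤ n ∧ p i = p (i + c)
    · obtain ⟨i, c, hc, hic, hp⟩ := hinj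
      obtain ⟨m, q, hq, h0, hm, hi⟩ := ih (n - c) (by omega) _ (h.cut_loop hE i c hc hic hp)
      refine ⟨m, q, hq, by simpa using h0, hm.trans ?_, hi⟩
      by_cases hn : n - c ≤ i
      · obtain rfl : n = i + c := by omega
        simpa using hp
      · simp [hn, (by omega : n - c + c = n)]
    · refine ⟨n, p, h, rfl, rfl, fun i j hi hj hij => ?_⟩
      by_contra hne
      rcases Nat.lt_or_gt_of_ne hne with hlt | hlt
      · exact hinj ⟨i, j - i, by omega, by omega, by rw [hij]; congr 1; omega⟩
      · exact hinj ⟨j, i - j, by omega, by omega, by rw [← hij]; congr 1; omega⟩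

lemma not_blocked_iff {E : V → V → Prop} {S : Set V} {n : ℕ} (p : ℕ → V) :
    ¬ Blocked E S (fun i : Fin (n + 1) => p i) ↔
      ∀ k, k + 1 < n → OpenAt E S (p k) (p (k + 1)) (p (k + 2)) := by
  constructor
  · intro h k hk
    refine ⟨fun h1 h2 => ?_, fun h1 h2 => h ⟨k + 1, by omega, hk, .inl ⟨h1, h2⟩⟩⟩
    by_contra hcon
    refine h ⟨k + 1, by omega, hk, .inr ⟨⟨h1, h2⟩, fun h3 => hcon ⟨_, h3, .refl⟩,
      fun d hd hdS => hcon ⟨d, hdS, hd.to_reflTransGen⟩⟩⟩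
  · rintro h ⟨k, hk0, hkn, hk⟩
    obtain ⟨k, rfl⟩ : ∃ j, k = j + 1 := ⟨k - 1, by omega⟩
    have hop := h k hkn
    rcases hk with ⟨h1, h2⟩ | ⟨⟨h1, h2⟩, h3, h4⟩
    · exact hop.2 h1 h2
    · obtain ⟨d, hd, hr⟩ := hop.1 h1 h2
      rcases Relation.reflTransGen_iff_eq_or_transGen.1 hr with rfl | ht
      · exact h3 hd
      · exact h4 d ht hd

/-- d-separation may be tested on walks instead of paths. -/
lemma dSep_iff {E : V → V → Prop} (hE : Acyclic E) {y z : V} {S : Set V} (hyz : y ≠ z) :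
    DSep E y z S ↔ y ∉ S ∧ z ∉ S ∧ ∀ n p, OpenWalk E S n p → p 0 = y → p n ≠ z := by
  constructor
  · rintro ⟨-, hy, hz, h⟩
    refine ⟨hy, hz, fun n p hp h0 hn => ?_⟩
    obtain ⟨m, q, hq, hq0, hqm, hinj⟩ := exists_openPath hE n p hp
    have hm : 0 < m := by
      rcases Nat.eq_zero_or_pos m with rfl | hm
      · exact absurd (by rw [← h0, ← hn, ← hq0, ← hqm]) hyz
      · exact hm
    refine (not_blocked_iff q).2 hq.2 (h m (fun i => q i) hm ⟨fun i j hij => ?_, fun i => ?_⟩ ?_ ?_)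
    · exact Fin.ext (hinj i j (by omega) (by omega) hij)
    · simpa using hq.1 i i.2
    · simpa using hq0.trans h0
    · simpa using hqm.trans hn
  · rintro ⟨hy, hz, h⟩
    refine ⟨hyz, hy, hz, fun n p _ hp h0 hn => ?_⟩
    by_contra hb
    -- Extend the path to all indices by repeating its last vertex.
    let q : ℕ → V := fun k => p ⟨min k n, by omega⟩
    have hq : p = fun i : Fin (n + 1) => q i := by
      funext i
      exact congrArg p (Fin.ext (by simp; omega))
    rw [hq, not_blocked_iff q] at hb
    refine h n q ⟨fun i hi => ?_, hb⟩ ?_ ?_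
    · have := hp.2 ⟨i, hi⟩
      rw [hq] at this
      simpa using this
    · rw [← h0]
      exact congrArg p (Fin.ext (by simp))
    · rw [← hn]
      exact congrArg p (Fin.ext (by simp))

/-- A d-connecting path, as an open walk without repeated vertices. -/
lemma exists_openPath_of_not_dSep {E : V → V → Prop} (hE : Acyclic E) {y z : V} {S : Set V}
    (hyz : y ≠ z) (hy : y ∉ S) (hz : z ∉ S) (h : ¬ DSep E y z S) :
    ∃ n p, OpenWalk E S n p ∧ p 0 = y ∧ p n = z ∧ ∀ i j, i ≤ n → j ≤ n → p i = p j → i = j := by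
  rw [dSep_iff hE hyz] at h
  push Not at h
  obtain ⟨n, p, hp, h0, hn⟩ := h hy hz
  obtain ⟨m, q, hq, hq0, hqm, hinj⟩ := exists_openPath hE n p hp
  exact ⟨m, q, hq, hq0.trans h0, hqm.trans hn, hinj⟩

/-! ### Local conditions for removability -/

/-- Every child of `X` is adjacent to every other neighbor of `X`. -/
def AdjCond (E : V → V → Prop) (X : V) : Prop :=
  ∀ y z, E X y → Adj E X z → y ≠ z → Adj E y z

/-- If `y → z` are children of `X`, then every parent of `y` is a parent of `z`. -/
def ParentCond (E : V → V → Prop) (X : V) : Prop :=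
  ∀ y z t, E X y → E X z → E y z → E t y → E t z

lemma AdjCond.shortcut {E : V → V → Prop} (hE : Acyclic E) {X a b : V} (h : AdjCond E X)
    (ha : E a X) (hb : E X b) : E a b := by
  have hab : b ≠ a := by
    rintro rfl
    exact hE.asymm ha hb
  rcases h b a hb (.inr ha) hab with h1 | h1
  · exact absurd (.tail (.tail (.single ha) hb) h1) (hE a)
  · exact h1

lemma conditions_of_markovBoundary {E : V → V → Prop} (hE : Acyclic E) (hdf : DiamondFree E)
    {X : V} (hW : ∃ W ∈ Ch E X ∪ {X}, Mb E X ∪ {X} = Pa E W ∪ {W}) :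
    AdjCond E X ∧ ParentCond E X := by
  obtain ⟨W, hWX, hMb⟩ := hW
  have hmem : ∀ v, v ∈ Mb E X → E v W ∨ v = W := fun v hv => by
    have : v ∈ Pa E W ∪ {W} := hMb ▸ Or.inl hv
    exact this
  have hch : ∀ v, E X v → E v W ∨ v = W := fun v hv => hmem v (.inl (.inr hv))
  have hnb : ∀ v, Adj E X v → E v W ∨ v = W := fun v hv =>
    hv.elim (hch v) (fun hv => hmem v (.inl (.inl hv)))
  rcases hWX with hWX | rfl
  · have hWX : E X W := hWX
    refine ⟨fun y z hy hz hyz => ?_, fun y z t hy hz hyz hty => ?_⟩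
    · rcases hch y hy with hyW | rfl
      · rcases hnb z hz with hzW | rfl
        · have hXz : X ≠ z := by
            rintro rfl
            rcases hz with hz | hz <;> exact hE.ne hz rfl
          exact hdf X y z W (hE.ne hy) hXz hyz hWX hyW hzW (.inl hy) hz
        · exact .inl hyW
      · rcases hnb z hz with hzW | rfl
        · exact .inr hzW
        · exact absurd rfl hyz
    · by_cases htX : t = X
      · exact htX ▸ hz
      have htW : E t W ∨ t = W := by
        by_cases hadj : Adj E X t
        · exact hnb t hadj
        · exact hmem t (.inr ⟨htX, hadj, y, hy, hty⟩)
      have htz : ¬ E z t := fun hzt => hE z (.tail (.tail (.single hzt) hty) hyz)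
      have hne : t ≠ z := by
        rintro rfl
        exact hE.asymm hty hyz
      rcases htW with htW | rfl
      · rcases hch z hz with hzW | rfl
        · rcases hch y hy with hyW | rfl
          · exact (hdf y t z W (hE.ne hty).symm (hE.ne hyz) hne hyW htW hzW
              (.inr hty) (.inl hyz)).resolve_right htz
          · exact absurd hzW (hE.asymm hyz)
        · exact htW
      · rcases hch y hy with hyW | rfl
        · exact absurd hyW (hE.asymm hty)
        · exact absurd rfl (hE.ne hty)
  · have hsink : ∀ v, ¬ E W v := fun v hv => by
      rcases hch v hv with h | rfl
      · exact hE.asymm hv h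
      · exact hE.ne hv rfl
    exact ⟨fun y _ hy => absurd hy (hsink y), fun y _ _ hy => absurd hy (hsink y)⟩

/-- An open walk without repeated vertices whose ends differ from `X` can be rerouted to an open walk
avoiding `X`. -/
lemma bypass {E : V → V → Prop} (hE : Acyclic E) {X : V} (hadj : AdjCond E X)
    (hpar : ParentCond E X) {S : Set V} (hXS : X ∉ S) {n : ℕ} {p : ℕ → V}
    (h : OpenWalk E S n p) (h0 : p 0 ≠ X) (hn : p n ≠ X)
    (hinj : ∀ i j, i ≤ n → j ≤ n → p i = p j → i = j) :
    ∃ m q, OpenWalk E S m q ∧ q 0 = p 0 ∧ q m = p n ∧ ∀ k, k ≤ m → q k ≠ X := by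
  by_cases hX : ∃ k, k ≤ n ∧ p k = X
  swap
  · exact ⟨n, p, h, rfl, rfl, fun k hk hkX => hX ⟨k, hk, hkX⟩⟩
  obtain ⟨k, hkn, hk⟩ := hX
  obtain ⟨k, rfl⟩ : ∃ j, k = j + 1 :=
    ⟨k - 1, by rcases k with _ | k; exacts [absurd hk h0, rfl]⟩
  have hlt : k + 1 < n := lt_of_le_of_ne hkn (by rintro rfl; exact hn hk)
  -- Any cut that removes position `k + 1` but not the ends produces the required walk.
  have key : ∀ i c, i ≤ k → k + 1 ≤ i + c → i + c < n →
      OpenWalk E S (n - c) (fun k => if k ≤ i then p k else p (k + c)) →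
      ∃ m q, OpenWalk E S m q ∧ q 0 = p 0 ∧ q m = p n ∧ ∀ k, k ≤ m → q k ≠ X := by
    intro i c hi hc hcn hw
    refine ⟨_, _, hw, by simp, ?_, fun l hl hlX => ?_⟩
    · simp only [if_neg (by omega : ¬ n - c ≤ i), (by omega : n - c + c = n)]
    · split_ifs at hlX with hli
      · have := hinj l (k + 1) (by omega) (by omega) (hlX.trans hk.symm)
        omega
      · have := hinj (l + c) (k + 1) (by omega) (by omega) (hlX.trans hk.symm)
        omega
  have hAX : Adj E (p k) X := hk ▸ h.1 k (by omega)
  have hXB : Adj E X (p (k + 2)) := hk ▸ h.1 (k + 1) (by omega)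
  have hAB : p k ≠ p (k + 2) := fun hab => by
    have := hinj k (k + 2) (by omega) (by omega) hab
    omega
  have hopX := h.2 k (by omega)
  rw [hk] at hopX
  -- Openness of the walk at the two neighbors of `X` on it.
  have hopA : ∀ l, l + 1 = k → OpenAt E S (p l) (p k) X := by
    rintro l rfl
    exact hk ▸ h.2 l (by omega)
  have hopB : k + 2 < n → OpenAt E S X (p (k + 2)) (p (k + 3)) := fun hl =>
    hk ▸ h.2 (k + 1) (by omega)
  -- Skipping `X` alone is possible when both ends of the new edge remain open.
  have skip : Adj E (p k) (p (k + 2)) →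
      (∀ l, l + 1 = k → OpenAt E S (p l) (p k) (p (k + 2))) →
      (k + 2 < n → OpenAt E S (p k) (p (k + 2)) (p (k + 3))) →
      ∃ m q, OpenWalk E S m q ∧ q 0 = p 0 ∧ q m = p n ∧ ∀ k, k ≤ m → q k ≠ X :=
    fun h1 h2 h3 => key k 1 le_rfl le_rfl hlt
      (h.cut k 1 hkn (fun _ => h1) (fun l hl _ => h2 l hl) h3)
  rcases hAX with hAX | hXA
  · rcases hXB with hXB | hBX
    · have hab := hadj.shortcut hE hAX hXB
      exact skip (.inl hab)
        (fun l hl => (hopA l hl).congr Iff.rfl (iff_of_false (hE.asymm hAX) (hE.asymm hab)))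
        (fun hl => (hopB hl).congr (iff_of_true hXB hab) Iff.rfl)
    · -- `X` is a collider: replace it by a child `c` which is in `S` or has a descendant there.
      obtain ⟨d, hd, hr⟩ := hopX.1 hAX hBX
      obtain rfl | ⟨c, hXc, hcd⟩ := Relation.ReflTransGen.cases_head hr
      · exact absurd hd hXS
      have hac := hadj.shortcut hE hAX hXc
      have hbc := hadj.shortcut hE hBX hXc
      let q := Function.update p (k + 1) c
      have hself : q (k + 1) = c := Function.update_self ..
      have hother : ∀ l, l ≠ k + 1 → q l = p l := fun l hl => Function.update_of_ne hl ..
      refine ⟨n, q, ⟨fun l hl => ?_, fun l hl => ?_⟩, hother 0 (by omega),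
        hother n (by omega), fun l hl hlX => ?_⟩
      · rcases eq_or_ne l k with rfl | h1
        · rw [hself, hother l (by omega)]
          exact .inl hac
        rcases eq_or_ne l (k + 1) with rfl | h2
        · rw [hself, hother _ (by omega)]
          exact .inr hbc
        rw [hother l h2, hother (l + 1) (by omega)]
        exact h.1 l hl
      · rcases eq_or_ne l k with rfl | h1
        · rw [hself, hother l (by omega), hother (l + 2) (by omega)]
          exact ⟨fun _ _ => ⟨d, hd, hcd⟩, fun hc => absurd ⟨hac, hbc⟩ hc⟩
        rcases eq_or_ne (l + 1) k with rfl | h2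
        · rw [hself, hother l (by omega), hother (l + 1) (by omega)]
          exact (hopA l rfl).congr Iff.rfl (iff_of_false (hE.asymm hAX) (hE.asymm hac))
        rcases eq_or_ne l (k + 1) with rfl | h3
        · rw [hself, hother (k + 1 + 1) (by omega), hother (k + 1 + 2) (by omega)]
          exact (hopB (by omega)).congr (iff_of_false (hE.asymm hBX) (hE.asymm hbc)) Iff.rfl
        rw [hother l h3, hother (l + 1) (by omega), hother (l + 2) (by omega)]
        exact h.2 l hl
      · rcases eq_or_ne l (k + 1) with rfl | h1
        · rw [hself] at hlX
          exact hE.ne hXc hlX.symm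
        · rw [hother l h1] at hlX
          exact h1 (hinj l (k + 1) hl hkn (hlX.trans hk.symm))
  · rcases hXB with hXB | hBX
    · rcases hadj _ _ hXA (.inl hXB) hAB with hab | hba
      · -- `A ← X → B` with `A → B`; the left neighbor `A` of `X` may cease to be a collider.
        have hB : k + 2 < n → OpenAt E S (p k) (p (k + 2)) (p (k + 3)) :=
          fun hl => (hopB hl).congr (iff_of_true hXB hab) Iff.rfl
        by_cases hcol : ∃ l, l + 1 = k ∧ E (p l) (p k)
        · obtain ⟨l, rfl, hTA⟩ := hcol
          have hTB := hpar _ _ _ hXA hXB hab hTA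
          refine key l 2 (by omega) le_rfl hlt (h.cut l 2 (by omega) (fun _ => .inl hTB) ?_ ?_)
          · rintro j rfl _
            exact (h.2 j (by omega)).congr Iff.rfl
              (iff_of_false (hE.asymm hTA) (hE.asymm hTB))
          · exact fun hl => (hopB hl).congr (iff_of_true hXB hTB) Iff.rfl
        · refine skip (.inl hab) (fun l hl => ?_) hB
          have hTA : ¬ E (p l) (p k) := fun hTA => hcol ⟨l, hl, hTA⟩
          exact ⟨fun h1 => absurd h1 hTA, fun _ => (hopA l hl).2 fun h1 => hTA h1.1⟩
      · -- The mirror image, `B → A`.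
        have hA : ∀ l, l + 1 = k → OpenAt E S (p l) (p k) (p (k + 2)) :=
          fun l hl => (hopA l hl).congr Iff.rfl (iff_of_true hXA hba)
        by_cases hcol : k + 2 < n ∧ E (p (k + 3)) (p (k + 2))
        · obtain ⟨hl, hTB⟩ := hcol
          have hTA := hpar _ _ _ hXB hXA hba hTB
          refine key k 2 le_rfl (by omega) hl (h.cut k 2 (by omega) (fun _ => .inr hTA) ?_ ?_)
          · exact fun j hj _ => (hopA j hj).congr Iff.rfl (iff_of_true hXA hTA)
          · exact fun hj => (h.2 (k + 2) hj).congr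
              (iff_of_false (hE.asymm hTB) (hE.asymm hTA)) Iff.rfl
        · refine skip (.inr hba) hA (fun hl => ?_)
          have hTB : ¬ E (p (k + 3)) (p (k + 2)) := fun hTB => hcol ⟨hl, hTB⟩
          exact ⟨fun _ h1 => absurd h1 hTB, fun _ => (hopB hl).2 fun h1 => hTB h1.2⟩
    · have hba := hadj.shortcut hE hBX hXA
      exact skip (.inr hba)
        (fun l hl => (hopA l hl).congr Iff.rfl (iff_of_true hXA hba))
        (fun hl => (hopB hl).congr (iff_of_false (hE.asymm hBX) (hE.asymm hba)) Iff.rfl)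

/-! ### Comparison with the graph without `X` -/

lemma del_le (E : V → V → Prop) (X : V) : Del E X ≤ E := fun _ _ h => h.1

lemma acyclic_del {E : V → V → Prop} (hE : Acyclic E) (X : V) : Acyclic (Del E X) :=
  fun v hv => hE v (Relation.TransGen.mono (del_le E X) v v hv)

lemma reflTransGen_del {E : V → V → Prop} (hE : Acyclic E) {X : V} (hadj : AdjCond E X)
    {a d : V} (ha : a ≠ X) (hd : d ≠ X) (h : Relation.ReflTransGen E a d) :
    Relation.ReflTransGen (Del E X) a d := by
  -- The second conjunct handles the moment at which the directed path stands at `X`.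
  have aux : ∀ b, Relation.ReflTransGen E b d →
      (b ≠ X → Relation.ReflTransGen (Del E X) b d) ∧
      (b = X → ∀ c, E c X → Relation.ReflTransGen (Del E X) c d) := by
    intro b hb
    induction hb using Relation.ReflTransGen.head_induction_on with
    | refl => exact ⟨fun _ => .refl, fun h => absurd h hd⟩
    | @head b c hbc _ ih =>
      refine ⟨fun hbX => ?_, ?_⟩
      · by_cases hcX : c = X
        · exact ih.2 hcX b (hcX ▸ hbc)
        · exact .head ⟨hbc, hbX, hcX⟩ (ih.1 hcX)
      · rintro rfl e he
        have hcX := (hE.ne hbc).symm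
        exact .head ⟨hadj.shortcut hE he hbc, hE.ne he, hcX⟩ (ih.1 hcX)
  exact (aux a h).1 ha

lemma openAt_del_iff {E : V → V → Prop} (hE : Acyclic E) {X : V} (hadj : AdjCond E X)
    {S : Set V} (hXS : X ∉ S) {a b c : V} (ha : a ≠ X) (hb : b ≠ X) (hc : c ≠ X) :
    OpenAt (Del E X) S a b c ↔ OpenAt E S a b c := by
  have h1 : Del E X a b ↔ E a b := ⟨fun h => h.1, fun h => ⟨h, ha, hb⟩⟩
  have h2 : Del E X c b ↔ E c b := ⟨fun h => h.1, fun h => ⟨h, hc, hb⟩⟩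
  have h3 : ∀ d ∈ S, Relation.ReflTransGen (Del E X) b d ↔ Relation.ReflTransGen E b d :=
    fun d hd => ⟨Relation.ReflTransGen.mono (del_le E X) b d,
      reflTransGen_del hE hadj hb (fun h => hXS (h ▸ hd))⟩
  have h4 : (∃ d ∈ S, Relation.ReflTransGen (Del E X) b d) ↔
      ∃ d ∈ S, Relation.ReflTransGen E b d :=
    exists_congr fun d => and_congr_right (h3 d)
  unfold OpenAt
  rw [h1, h2, h4]

lemma openWalk_del_iff {E : V → V → Prop} (hE : Acyclic E) {X : V} (hadj : AdjCond E X)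
    {S : Set V} (hXS : X ∉ S) {n : ℕ} {p : ℕ → V} (hp : ∀ k, k ≤ n → p k ≠ X) :
    OpenWalk (Del E X) S n p ↔ OpenWalk E S n p := by
  refine and_congr (forall₂_congr fun i hi => ?_) (forall₂_congr fun k hk => ?_)
  · have h1 := hp i (by omega)
    have h2 := hp (i + 1) (by omega)
    simp [Adj, Del, h1, h2]
  · exact openAt_del_iff hE hadj hXS (hp k (by omega)) (hp (k + 1) (by omega))
      (hp (k + 2) (by omega))

lemma removable_of_conditions {E : V → V → Prop} (hE : Acyclic E) {X : V} (hadj : AdjCond E X)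
    (hpar : ParentCond E X) : Removable E X := by
  intro y z hy hz hyz S hXS
  constructor
  · intro h
    obtain ⟨hyS, hzS, h⟩ := (dSep_iff hE hyz).1 h
    refine (dSep_iff (acyclic_del hE X) hyz).2 ⟨hyS, hzS, fun n p hp h0 => ?_⟩
    have havoid : ∀ k, k ≤ n → p k ≠ X := by
      intro k hk
      rcases k with _ | k
      · exact h0 ▸ hy
      · rcases hp.1 k hk with h1 | h1
        exacts [h1.2.2, h1.2.1]
    exact h n p ((openWalk_del_iff hE hadj hXS havoid).1 hp) h0
  · intro h
    obtain ⟨hyS, hzS, h⟩ := (dSep_iff (acyclic_del hE X) hyz).1 h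
    by_contra hcon
    obtain ⟨n, p, hp, h0, hn, hinj⟩ := exists_openPath_of_not_dSep hE hyz hyS hzS hcon
    obtain ⟨m, q, hq, hq0, hqm, havoid⟩ :=
      bypass hE hadj hpar hXS hp (h0 ▸ hy) (hn ▸ hz) hinj
    exact h m q ((openWalk_del_iff hE hadj hXS havoid).2 hq) (hq0.trans h0) (hqm.trans hn)

/-- in a diamond-free DAG, if some `W ∈ Ch(X) ∪ {X}` satisfies
`Mb(X) ∪ {X} = Pa(W) ∪ {W}`, then `X` is removable. -/
theorem stmt11 [Fintype V] (E : V → V → Prop) (hacy : Acyclic E)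
    (hdf : DiamondFree E) (X : V)
    (hW : ∃ W ∈ Ch E X ∪ {X}, Mb E X ∪ {X} = Pa E W ∪ {W}) :
    Removable E X := by
  obtain ⟨hadj, hpar⟩ := conditions_of_markovBoundary hacy hdf hW
  exact removable_of_conditions hacy hadj hpar
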